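/- Let (T, f) be a dynamical system on a tree, F the induced map on the functional envelope (the closure of the space of continuous self-maps of T in the Hausdorff metric on graphs), and 𝓕 the induced map on Con(T). Then for every ε > 0 and n ≥ 1: sep(n, f, ε)^{N₁(ε)} ≤ sep(n, F, ε) ≤ span(n, 𝓕, ε/2)^{N₂(ε)}, where N₁(ε), N₂(ε) do not depend on n and N₁(ε), N₂(ε) → +∞ as ε → 0+. Here one may take N₂(ε) to be the minimal number of subcontinua of diameter < ε covering T, and N₁(ε) = ⌊1/(2ε)⌋ − 1. -/

import Mathlib

open Set Filter Metric Topology TopologicalSpace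

/-- An arc: a subset homeomorphic to `[0,1]`. -/
def IsArc {T : Type*} [TopologicalSpace T] (A : Set T) : Prop :=
  Nonempty (↥(Set.Icc (0:ℝ) 1) ≃ₜ ↥A)

/-- An arc with endpoints `x` and `y`. -/
def IsArcBetween {T : Type*} [TopologicalSpace T] (A : Set T) (x y : T) : Prop :=
  ∃ e : ↥(Set.Icc (0:ℝ) 1) ≃ₜ ↥A,
    ((e ⟨0, by norm_num⟩ : ↥A) : T) = x ∧ ((e ⟨1, by norm_num⟩ : ↥A) : T) = y

/-- A tree: a continuum which is uniquely arcwise connected and is a point or a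
union of finitely many arcs. -/
structure IsTreeSpace (T : Type*) [MetricSpace T] : Prop where
  compact : CompactSpace T
  conn : ConnectedSpace T
  uniqueArc : ∀ x y : T, x ≠ y → ∃! A : Set T, IsArcBetween A x y
  finiteArcs : (∃ x : T, (Set.univ : Set T) = {x}) ∨
    ∃ s : Finset (Set T), (∀ A ∈ s, IsArc A) ∧ ⋃₀ (s : Set (Set T)) = Set.univ

/-- The unique arc from `x` to `y` in a tree. -/
noncomputable def treeArc {T : Type*} [MetricSpace T] (hT : IsTreeSpace T) (x y : T) :
    Set T := by
  classical exact if h : x = y then {x} else (hT.uniqueArc x y h).choose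

/-- `Comp B x` : the connected component of `x` in `B` if `x ∈ B`, else `{x}`. -/
noncomputable def Comp {T : Type*} [TopologicalSpace T] (B : Set T) (x : T) : Set T := by
  classical exact if x ∈ B then connectedComponentIn B x else {x}

/-- `x` is an endpoint of the whole space (valence one). -/
def IsEnd {T : Type*} [TopologicalSpace T] (x : T) : Prop :=
  IsConnected ({x}ᶜ : Set T)

/-- `x` is a cut-point of the whole space (valence at least two). -/
def IsCut {T : Type*} [TopologicalSpace T] (x : T) : Prop :=
  ¬ IsPreconnected ({x}ᶜ : Set T)

/-- `x` is an endpoint of the subspace `S` (valence one in `S`). -/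
def IsEndpointOf {T : Type*} [TopologicalSpace T] (S : Set T) (x : T) : Prop :=
  x ∈ S ∧ IsConnected (S \ {x})

/-- A subcontinuum: a nonempty compact connected subset. -/
def IsSubcontinuum {T : Type*} [TopologicalSpace T] (A : Set T) : Prop :=
  A.Nonempty ∧ IsCompact A ∧ IsConnected A

/-- Attracting fixed point. -/
def IsAFP {T : Type*} [TopologicalSpace T] (f : T → T) (x : T) : Prop :=
  f x = x ∧ ∀ U : Set T, IsOpen U → x ∈ U →
    ∃ V : Set T, IsOpen V ∧ x ∈ V ∧ V ⊆ U ∧ f '' closure V ⊆ V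

/-- `A` is asymptotically periodic under `f`: for some `p ≥ 1` the sequence
`f^{pn}(A)` converges in the Hausdorff metric (to a nonempty compact set). -/
def AsympPeriodic {T : Type*} [MetricSpace T] (f : T → T) (A : Set T) : Prop :=
  ∃ p : ℕ, 1 ≤ p ∧ ∃ L : Set T, L.Nonempty ∧ IsCompact L ∧
    Tendsto (fun n : ℕ => hausdorffDist (f^[p * n] '' A) L) atTop (𝓝 0)

/-- Kuratowski lower limit of a sequence of sets. -/
def KLiminf {T : Type*} [TopologicalSpace T] (A : ℕ → Set T) : Set T :=
  {x | ∀ U : Set T, IsOpen U → x ∈ U → ∀ᶠ n in atTop, (U ∩ A n).Nonempty}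

/-- Kuratowski upper limit of a sequence of sets. -/
def KLimsup {T : Type*} [TopologicalSpace T] (A : ℕ → Set T) : Set T :=
  {x | ∀ U : Set T, IsOpen U → x ∈ U → ∃ᶠ n in atTop, (U ∩ A n).Nonempty}

/-- Convergence in the hyperspace: the Kuratowski lower and upper limits agree. -/
def KConv {T : Type*} [TopologicalSpace T] (A : ℕ → Set T) : Prop :=
  KLiminf A = KLimsup A

/-- Set-theoretic limit superior of the iterated images of `A`. -/
def Ls {T : Type*} (f : T → T) (A : Set T) : Set T :=
  ⋂ m : ℕ, ⋃ n : ℕ, ⋃ (_ : m ≤ n), f^[n] '' A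

/-- The hyperspace of subcontinua of `T`, with the Hausdorff metric. -/
abbrev SubCon (T : Type*) [MetricSpace T] :=
  {A : NonemptyCompacts T // IsConnected (A.1 : Set T)}

/-- The induced map on the hyperspace of subcontinua. -/
noncomputable def indCon {T : Type*} [MetricSpace T] (f : T → T) (hf : Continuous f) :
    SubCon T → SubCon T :=
  fun A => ⟨⟨⟨f '' (A.1 : Set T), A.1.isCompact.image hf⟩, A.1.nonempty.image f⟩,
    A.2.image f hf.continuousOn⟩

/-- Topological entropy (Bowen–Dinaburg) of `f` on the subset `S`. -/
noncomputable def entropyOn {X : Type*} [MetricSpace X] (f : X → X) (S : Set X) : EReal :=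
  Dynamics.coverEntropy f S

/-- Topological entropy of `f`. -/
noncomputable def entropy {X : Type*} [MetricSpace X] (f : X → X) : EReal :=
  Dynamics.coverEntropy f Set.univ

/-- Maximal cardinality of an `(n,f,ε)`-separated subset of `S`. -/
noncomputable def sepNumOn {X : Type*} [MetricSpace X] (f : X → X) (S : Set X)
    (n : ℕ) (ε : ℝ) : ℕ :=
  sSup {k : ℕ | ∃ E : Finset X, ↑E ⊆ S ∧
    (∀ x ∈ E, ∀ y ∈ E, x ≠ y → ∃ j < n, ε < dist (f^[j] x) (f^[j] y)) ∧ E.card = k}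

/-- Minimal cardinality of an `(n,f,ε)`-spanning subset of `S`. -/
noncomputable def spanNumOn {X : Type*} [MetricSpace X] (f : X → X) (S : Set X)
    (n : ℕ) (ε : ℝ) : ℕ :=
  sInf {k : ℕ | ∃ F : Finset X, ↑F ⊆ S ∧
    (∀ x ∈ S, ∃ y ∈ F, ∀ j < n, dist (f^[j] x) (f^[j] y) ≤ ε) ∧ F.card = k}

noncomputable def sepNum {X : Type*} [MetricSpace X] (f : X → X) (n : ℕ) (ε : ℝ) : ℕ :=
  sepNumOn f Set.univ n ε

noncomputable def spanNum {X : Type*} [MetricSpace X] (f : X → X) (n : ℕ) (ε : ℝ) : ℕ :=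
  spanNumOn f Set.univ n ε

/-- The graph of a map. -/
def graphOf {X : Type*} (φ : X → X) : Set (X × X) := {p | p.2 = φ p.1}

/-- The functional envelope: the closure, in the hyperspace of nonempty compact
subsets of `X × X` with the Hausdorff metric, of the set of graphs of continuous
self-maps of `X`. -/
def FunctionalEnvelope (X : Type*) [MetricSpace X] :
    Set (NonemptyCompacts (X × X)) :=
  closure {G : NonemptyCompacts (X × X) | ∃ φ : X → X, Continuous φ ∧
    (G : Set (X × X)) = graphOf φ}

/-- `F` is the map induced by `f` on the functional envelope:
`F(φ) = f ∘ φ`, i.e. on graphs, `F(G) = (id × f)(G)`. -/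
def IsEnvelopeMap {X : Type*} [MetricSpace X] (f : X → X)
    (F : ↥(FunctionalEnvelope X) → ↥(FunctionalEnvelope X)) : Prop :=
  ∀ G : ↥(FunctionalEnvelope X),
    ((F G : NonemptyCompacts (X × X)) : Set (X × X)) =
      Prod.map id f '' ((G : NonemptyCompacts (X × X)) : Set (X × X))

/-- The setoid on `T` identifying all points of `M` (so that `Quotient` is `T/M`). -/
def collapseSetoid {T : Type*} (M : Set T) : Setoid T where
  r a b := a = b ∨ (a ∈ M ∧ b ∈ M)
  iseqv := by
    refine ⟨fun a => Or.inl rfl, ?_, ?_⟩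
    · rintro a b (rfl | ⟨h1, h2⟩)
      exacts [Or.inl rfl, Or.inr ⟨h2, h1⟩]
    · rintro a b c (rfl | ⟨h1, h2⟩) h
      · exact h
      · rcases h with rfl | ⟨h3, h4⟩
        exacts [Or.inr ⟨h1, h2⟩, Or.inr ⟨h1, h4⟩]

section HausdorffDistance

variable {X : Type*} [MetricSpace X]

/-- Every point of a compact set is within the Hausdorff distance of some point of the other. -/
lemma exists_dist_le_dist_nonemptyCompacts (K L : NonemptyCompacts X) {p : X}
    (hp : p ∈ (K : Set X)) : ∃ q ∈ (L : Set X), dist p q ≤ dist K L := by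
  obtain ⟨q, hq, h⟩ := L.isCompact.exists_infDist_eq_dist L.nonempty p
  refine ⟨q, hq, ?_⟩
  rw [← h, NonemptyCompacts.dist_eq]
  exact infDist_le_hausdorffDist_of_mem hp
    (hausdorffEDist_ne_top_of_nonempty_of_bounded K.nonempty L.nonempty
      K.isCompact.isBounded L.isCompact.isBounded)

lemma dist_nonemptyCompacts_le {K L : NonemptyCompacts X} {r : ℝ} (hr : 0 ≤ r)
    (h₁ : ∀ p ∈ (K : Set X), ∃ q ∈ (L : Set X), dist p q ≤ r)
    (h₂ : ∀ q ∈ (L : Set X), ∃ p ∈ (K : Set X), dist q p ≤ r) : dist K L ≤ r := by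
  rw [NonemptyCompacts.dist_eq]
  exact hausdorffDist_le_of_mem_dist hr h₁ h₂

end HausdorffDistance

section Spanning

/-- A uniformly continuous map on a totally bounded space has finite spanning sets. -/
lemma exists_finset_spanning {X : Type*} [MetricSpace X] (hX : TotallyBounded (univ : Set X))
    {g : X → X} (hg : UniformContinuous g) (n : ℕ) {ε : ℝ} (hε : 0 < ε) :
    ∃ S : Finset X, ∀ x, ∃ y ∈ S, ∀ j < n, dist (g^[j] x) (g^[j] y) ≤ ε := by
  have huc : UniformContinuous (fun x (j : Fin n) => g^[j] x) :=
    uniformContinuous_pi.2 fun j => UniformContinuous.iterate g j hg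
  obtain ⟨δ, hδ, h⟩ := Metric.uniformContinuous_iff.1 huc ε hε
  obtain ⟨t, ht, hcov⟩ := Metric.totallyBounded_iff.1 hX δ hδ
  refine ⟨ht.toFinset, fun x => ?_⟩
  obtain ⟨y, hy, hxy⟩ := mem_iUnion₂.1 (hcov (mem_univ x))
  refine ⟨y, ht.mem_toFinset.2 hy, fun j hj => ?_⟩
  exact (dist_le_pi_dist _ _ (⟨j, hj⟩ : Fin n)).trans (h hxy).le

/-- The minimum defining `spanNum` is attained as soon as some finite spanning set exists. -/
lemma exists_spanning_card_eq_spanNum {X : Type*} [MetricSpace X] {g : X → X} {n : ℕ} {ε : ℝ}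
    (h : ∃ S : Finset X, ∀ x, ∃ y ∈ S, ∀ j < n, dist (g^[j] x) (g^[j] y) ≤ ε) :
    ∃ S : Finset X, (∀ x, ∃ y ∈ S, ∀ j < n, dist (g^[j] x) (g^[j] y) ≤ ε) ∧
      S.card = spanNum g n ε := by
  obtain ⟨S, hS⟩ := h
  obtain ⟨S', -, h', hcard⟩ := Nat.sInf_mem
    (s := {k : ℕ | ∃ F : Finset X, ↑F ⊆ (univ : Set X) ∧
      (∀ x ∈ (univ : Set X), ∃ y ∈ F, ∀ j < n, dist (g^[j] x) (g^[j] y) ≤ ε) ∧ F.card = k})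
    ⟨S.card, S, subset_univ _, fun x _ => hS x, rfl⟩
  exact ⟨S', fun x => h' x (mem_univ x), hcard⟩

end Spanning

section InducedMaps

variable {T : Type*} [MetricSpace T]

lemma coe_iterate_indCon {f : T → T} (hf : Continuous f) (j : ℕ) (A : SubCon T) :
    ((((indCon f hf)^[j] A).1 : NonemptyCompacts T) : Set T) = f^[j] '' (A.1 : Set T) := by
  induction j with
  | zero => simp
  | succ j ih =>
    rw [Function.iterate_succ_apply', Function.iterate_succ', image_comp, ← ih]
    rfl

lemma coe_iterate_envelopeMap {f : T → T}
    {F : ↥(FunctionalEnvelope T) → ↥(FunctionalEnvelope T)} (hF : IsEnvelopeMap f F) (j : ℕ)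
    (G : ↥(FunctionalEnvelope T)) :
    ((F^[j] G : NonemptyCompacts (T × T)) : Set (T × T)) =
      Prod.map id f^[j] '' ((G : NonemptyCompacts (T × T)) : Set (T × T)) := by
  induction j with
  | zero => simp
  | succ j ih =>
    rw [Function.iterate_succ_apply', hF, ih, ← image_comp, Prod.map_comp_map,
      Function.iterate_succ', Function.id_comp]

lemma uniformContinuous_indCon [CompactSpace T] {f : T → T} (hf : Continuous f) :
    UniformContinuous (indCon f hf) := by
  have huc := CompactSpace.uniformContinuous_of_continuous hf
  rw [Metric.uniformContinuous_iff] at huc ⊢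
  intro ε hε
  obtain ⟨δ, hδ, h⟩ := huc (ε / 2) (half_pos hε)
  have key : ∀ A B : SubCon T, dist A B < δ →
      ∀ p ∈ f '' (A.1 : Set T), ∃ q ∈ f '' (B.1 : Set T), dist p q ≤ ε / 2 := by
    rintro A B hAB _ ⟨a, ha, rfl⟩
    obtain ⟨b, hb, hab⟩ := exists_dist_le_dist_nonemptyCompacts A.1 B.1 ha
    exact ⟨f b, mem_image_of_mem f hb, (h (hab.trans_lt hAB)).le⟩
  refine ⟨δ, hδ, fun A B hAB => ?_⟩
  refine lt_of_le_of_lt ?_ (half_lt_self hε)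
  exact dist_nonemptyCompacts_le (half_pos hε).le (key A B hAB) (key B A (dist_comm A B ▸ hAB))

lemma totallyBounded_univ_subCon [CompactSpace T] :
    TotallyBounded (univ : Set (SubCon T)) := by
  exact totallyBounded_preimage isUniformEmbedding_subtype_val.isUniformInducing
    isCompact_univ.totallyBounded

end InducedMaps

section SmallContinua

variable {T : Type*} [MetricSpace T]

/-- A compact subset of `ℝ` mapped continuously is covered by finitely many small connected
closed sets. -/
lemma exists_finset_cover_image_real {g : ℝ → T} (hg : Continuous g) {K : Set ℝ}
    (hK : IsCompact K) {ε : ℝ} (hε : 0 < ε) :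
    ∃ s : Set (Set T), s.Finite ∧ (∀ A ∈ s, IsClosed A ∧ IsConnected A ∧
      ∀ x ∈ A, ∀ y ∈ A, dist x y ≤ ε) ∧ g '' K ⊆ ⋃₀ s := by
  have hloc : ∀ x : ℝ, ∃ r > 0, ∀ y ∈ ball x r, dist (g y) (g x) < ε / 2 := fun x =>
    Metric.continuous_iff.1 hg x (ε / 2) (half_pos hε)
  choose r hr hgr using hloc
  obtain ⟨t, -, ht⟩ := hK.elim_nhds_subcover (fun x => ball x (r x))
    fun x _ => ball_mem_nhds x (hr x)
  refine ⟨(fun x => closure (g '' ball x (r x))) '' t, t.finite_toSet.image _, ?_, ?_⟩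
  · rintro _ ⟨x, -, rfl⟩
    have hsub : closure (g '' ball x (r x)) ⊆ closedBall (g x) (ε / 2) := by
      refine closure_minimal ?_ isClosed_closedBall
      rintro _ ⟨y, hy, rfl⟩
      exact (hgr x y hy).le
    refine ⟨isClosed_closure, ?_, fun y hy z hz => ?_⟩
    · refine IsConnected.closure (IsConnected.image ?_ g hg.continuousOn)
      exact (convex_ball x (r x)).isConnected ⟨x, mem_ball_self (hr x)⟩
    · have h₁ := mem_closedBall.1 (hsub hy)
      have h₂ := mem_closedBall.1 (hsub hz)
      linarith [dist_triangle_right y z (g x)]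
  · rintro _ ⟨y, hy, rfl⟩
    obtain ⟨x, hx, hxy⟩ := mem_iUnion₂.1 (ht hy)
    exact ⟨_, mem_image_of_mem _ hx, subset_closure (mem_image_of_mem g hxy)⟩

lemma IsArc.exists_finset_cover {A : Set T} (hA : IsArc A) {ε : ℝ} (hε : 0 < ε) :
    ∃ s : Set (Set T), s.Finite ∧ (∀ B ∈ s, IsClosed B ∧ IsConnected B ∧
      ∀ x ∈ B, ∀ y ∈ B, dist x y ≤ ε) ∧ A ⊆ ⋃₀ s := by
  obtain ⟨e⟩ := hA
  have hg : Continuous fun t : ℝ => ((e (projIcc 0 1 zero_le_one t) : A) : T) :=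
    continuous_subtype_val.comp (e.continuous.comp continuous_projIcc)
  obtain ⟨s, hs, hB, hcov⟩ := exists_finset_cover_image_real hg (isCompact_Icc (a := 0) (b := 1)) hε
  refine ⟨s, hs, hB, fun a ha => hcov ⟨(e.symm ⟨a, ha⟩ : ℝ), (e.symm ⟨a, ha⟩).2, ?_⟩⟩
  simp [projIcc_val]

/-- A tree is covered by finitely many subcontinua of small diameter. -/
lemma IsTreeSpace.exists_finite_cover (hT : IsTreeSpace T) {ε : ℝ} (hε : 0 < ε) :
    ∃ s : Set (Set T), s.Finite ∧ (∀ B ∈ s, IsClosed B ∧ IsConnected B ∧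
      ∀ x ∈ B, ∀ y ∈ B, dist x y ≤ ε) ∧ ⋃₀ s = univ := by
  rcases hT.finiteArcs with ⟨x, hx⟩ | ⟨a, ha, hcov⟩
  · refine ⟨{{x}}, finite_singleton _, ?_, by simp [hx]⟩
    rintro _ rfl
    refine ⟨isClosed_singleton, isConnected_singleton, ?_⟩
    rintro _ rfl _ rfl
    simpa using hε.le
  · choose! s hs hB hA using fun A (hA : A ∈ a) => (ha A hA).exists_finset_cover hε
    refine ⟨⋃ A ∈ a, s A, a.finite_toSet.biUnion hs, ?_, ?_⟩
    · intro B hB'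
      obtain ⟨A, hAa, hBA⟩ := mem_iUnion₂.1 hB'
      exact hB A hAa B hBA
    · refine eq_univ_of_forall fun x => ?_
      obtain ⟨A, hAa, hxA⟩ := (hcov ▸ mem_univ x : x ∈ ⋃₀ (a : Set (Set T)))
      obtain ⟨B, hBA, hxB⟩ := hA A hAa hxA
      exact ⟨B, mem_iUnion₂.2 ⟨A, hAa, hBA⟩, hxB⟩

/-- Subcontinua of a tree have arbitrarily small connected neighbourhoods. -/
lemma IsTreeSpace.exists_connected_nhd (hT : IsTreeSpace T) {C : Set T} (hC : IsCompact C)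
    (hconn : IsConnected C) {ε : ℝ} (hε : 0 < ε) :
    ∃ C' : Set T, IsPreconnected C' ∧ (∀ x ∈ C', ∃ c ∈ C, dist x c ≤ ε) ∧
      ∃ η > 0, ∀ c ∈ C, ∀ x, dist x c < η → x ∈ C' := by
  obtain ⟨s, hs, hB, hcov⟩ := hT.exists_finite_cover hε
  set s₁ := {B ∈ s | (C ∩ B).Nonempty}
  set s₂ := {B ∈ s | ¬ (C ∩ B).Nonempty}
  obtain ⟨c₀, hc₀⟩ := hconn.nonempty
  have hclosed : IsClosed (⋃₀ s₂) := by
    rw [sUnion_eq_biUnion]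
    exact (hs.subset (sep_subset _ _)).isClosed_biUnion fun B h => (hB B h.1).1
  have hdisj : C ⊆ (⋃₀ s₂)ᶜ := by
    rintro c hc ⟨B, hB₂, hcB⟩
    exact hB₂.2 ⟨c, hc, hcB⟩
  obtain ⟨η, hη, hthick⟩ := hC.exists_thickening_subset_open hclosed.isOpen_compl hdisj
  refine ⟨⋃₀ s₁, ?_, ?_, η, hη, ?_⟩
  · have heq : ⋃₀ s₁ = ⋃₀ ((fun B => C ∪ B) '' s₁) := by
      refine Subset.antisymm ?_ ?_
      · rintro x ⟨B, hB₁, hx⟩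
        exact ⟨_, mem_image_of_mem _ hB₁, Or.inr hx⟩
      · rintro x ⟨_, ⟨B, hB₁, rfl⟩, hx | hx⟩
        · obtain ⟨B', hB', hxB'⟩ := (hcov ▸ mem_univ x : x ∈ ⋃₀ s)
          exact ⟨B', ⟨hB', x, hx, hxB'⟩, hxB'⟩
        · exact ⟨B, hB₁, hx⟩
    rw [heq]
    refine isPreconnected_sUnion c₀ _ ?_ ?_
    · rintro _ ⟨B, -, rfl⟩
      exact Or.inl hc₀
    · rintro _ ⟨B, ⟨hBs, hCB⟩, rfl⟩
      exact (hconn.union hCB (hB B hBs).2.1).isPreconnected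
  · rintro x ⟨B, ⟨hBs, c, hc, hcB⟩, hx⟩
    exact ⟨c, hc, (hB B hBs).2.2 x hx c hcB⟩
  · intro c hc x hx
    have hx₂ := hthick (mem_thickening_iff.2 ⟨c, hc, hx⟩)
    obtain ⟨B, hBs, hxB⟩ := (hcov ▸ mem_univ x : x ∈ ⋃₀ s)
    refine ⟨B, ⟨hBs, ?_⟩, hxB⟩
    by_contra hne
    exact hx₂ ⟨B, ⟨hBs, hne⟩, hxB⟩

end SmallContinua

section Envelope

variable {T : Type*} [MetricSpace T]

lemma exists_continuous_near_envelope {G : NonemptyCompacts (T × T)}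
    (hG : G ∈ FunctionalEnvelope T) {δ : ℝ} (hδ : 0 < δ) :
    ∃ φ : T → T, Continuous φ ∧ (∀ x, ∃ q ∈ (G : Set (T × T)), dist (x, φ x) q < δ) ∧
      ∀ q ∈ (G : Set (T × T)), ∃ x, dist q (x, φ x) < δ := by
  obtain ⟨H, ⟨φ, hφ, hH⟩, hd⟩ := Metric.mem_closure_iff.1 hG δ hδ
  refine ⟨φ, hφ, fun x => ?_, fun q hq => ?_⟩
  · have hx : (x, φ x) ∈ (H : Set (T × T)) := by rw [hH]; exact rfl
    obtain ⟨q, hq, hxq⟩ := exists_dist_le_dist_nonemptyCompacts H G hx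
    exact ⟨q, hq, hxq.trans_lt (dist_comm G H ▸ hd)⟩
  · obtain ⟨p, hp, hqp⟩ := exists_dist_le_dist_nonemptyCompacts G H hq
    rw [hH] at hp
    refine ⟨p.1, ?_⟩
    have : p = (p.1, φ p.1) := Prod.ext rfl hp
    rw [← this]
    exact hqp.trans_lt hd

/-- The value on `C` of the set-valued map with graph `G`. -/
def imageOn (G : Set (T × T)) (C : Set T) : Set T :=
  Prod.snd '' (G ∩ Prod.fst ⁻¹' C)

lemma isCompact_imageOn {G : Set (T × T)} (hG : IsCompact G) {C : Set T} (hC : IsClosed C) :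
    IsCompact (imageOn G C) :=
  (hG.inter_right (hC.preimage continuous_fst)).image continuous_snd

lemma image_fst_envelope {G : NonemptyCompacts (T × T)} (hG : G ∈ FunctionalEnvelope T) :
    Prod.fst '' (G : Set (T × T)) = univ := by
  refine eq_univ_of_forall fun x => ?_
  have hcl : IsClosed (Prod.fst '' (G : Set (T × T))) :=
    (G.isCompact.image continuous_fst).isClosed
  rw [← hcl.closure_eq, Metric.mem_closure_iff]
  intro δ hδ
  obtain ⟨φ, -, h, -⟩ := exists_continuous_near_envelope hG hδ
  obtain ⟨q, hq, hd⟩ := h x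
  exact ⟨q.1, mem_image_of_mem _ hq, lt_of_le_of_lt (le_max_left _ _) hd⟩

/-- Elements of the functional envelope of a tree map subcontinua to connected sets. -/
lemma IsTreeSpace.isConnected_imageOn (hT : IsTreeSpace T) {G : NonemptyCompacts (T × T)}
    (hG : G ∈ FunctionalEnvelope T) {C : Set T} (hC : IsClosed C) (hconn : IsConnected C) :
    IsConnected (imageOn (G : Set (T × T)) C) := by
  have := hT.compact
  have hP := isCompact_imageOn G.isCompact hC
  refine ⟨?_, ?_⟩
  · obtain ⟨c, hc⟩ := hconn.nonempty
    obtain ⟨q, hq, rfl⟩ := (image_fst_envelope hG ▸ mem_univ c :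
      c ∈ Prod.fst '' (G : Set (T × T)))
    exact ⟨q.2, q, ⟨hq, hc⟩, rfl⟩
  rw [isPreconnected_iff_subset_of_fully_disjoint_closed hP.isClosed]
  intro u v hu hv hcov huv
  by_contra! hne
  obtain ⟨hnu, hnv⟩ := hne
  obtain ⟨_, ⟨a, ⟨haG, haC⟩, rfl⟩, hau⟩ := not_subset.1 hnu
  obtain ⟨_, ⟨b, ⟨hbG, hbC⟩, rfl⟩, hbv⟩ := not_subset.1 hnv
  have hav : a.2 ∈ v := (hcov ⟨a, ⟨haG, haC⟩, rfl⟩).resolve_left hau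
  have hbu : b.2 ∈ u := (hcov ⟨b, ⟨hbG, hbC⟩, rfl⟩).resolve_right hbv
  obtain ⟨r, hr, hdisj⟩ := huv.exists_thickenings hu.isCompact hv
  set W := thickening (r / 2) u ∪ thickening (r / 2) v
  have hWo : IsOpen W := isOpen_thickening.union isOpen_thickening
  have hfar : IsCompact (Prod.fst '' ((G : Set (T × T)) ∩ Prod.snd ⁻¹' Wᶜ)) :=
    (G.isCompact.inter_right (hWo.isClosed_compl.preimage continuous_snd)).image continuous_fst
  have hCfar : C ⊆ (Prod.fst '' ((G : Set (T × T)) ∩ Prod.snd ⁻¹' Wᶜ))ᶜ := by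
    rintro _ hc ⟨q, ⟨hq, hqW⟩, rfl⟩
    refine hqW ?_
    rcases hcov ⟨q, ⟨hq, hc⟩, rfl⟩ with h | h
    · exact Or.inl (self_subset_thickening (half_pos hr) _ h)
    · exact Or.inr (self_subset_thickening (half_pos hr) _ h)
  obtain ⟨s, hs, hthick⟩ :=
    hC.isCompact.exists_thickening_subset_open hfar.isClosed.isOpen_compl hCfar
  obtain ⟨C', hC'conn, hC'near, η, hη, hC'nhd⟩ :=
    hT.exists_connected_nhd hC.isCompact hconn (half_pos hs)
  obtain ⟨φ, hφ, hφG, hGφ⟩ := exists_continuous_near_envelope hG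
    (δ := min (min (r / 2) (s / 2)) η) (lt_min (lt_min (half_pos hr) (half_pos hs)) hη)
  simp only [lt_min_iff, Prod.dist_eq, max_lt_iff] at hφG hGφ
  have hsub : φ '' C' ⊆ thickening r u ∪ thickening r v := by
    rintro _ ⟨x, hx, rfl⟩
    obtain ⟨q, hq, ⟨⟨-, hφr⟩, hxs, -⟩, -⟩ := hφG x
    obtain ⟨c, hc, hxc⟩ := hC'near x hx
    have hqW : q.2 ∈ W := by
      by_contra hqW
      refine hthick (mem_thickening_iff.2 ⟨c, hc, ?_⟩) ⟨q, ⟨hq, hqW⟩, rfl⟩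
      linarith [dist_triangle_left q.1 c x]
    rcases hqW with h | h
    · obtain ⟨z, hz, hqz⟩ := mem_thickening_iff.1 h
      exact Or.inl (mem_thickening_iff.2 ⟨z, hz, by linarith [dist_triangle (φ x) q.2 z]⟩)
    · obtain ⟨z, hz, hqz⟩ := mem_thickening_iff.1 h
      exact Or.inr (mem_thickening_iff.2 ⟨z, hz, by linarith [dist_triangle (φ x) q.2 z]⟩)
  have hmeet : ∀ q ∈ (G : Set (T × T)), q.1 ∈ C → ∃ x ∈ C', dist (φ x) q.2 < r := by
    intro q hq hqC
    obtain ⟨x, ⟨⟨-, hxr⟩, -⟩, hxη, -⟩ := hGφ q hq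
    exact ⟨x, hC'nhd q.1 hqC x (by rwa [dist_comm]), by rw [dist_comm]; linarith⟩
  obtain ⟨x, hx, hxb⟩ := hmeet b hbG hbC
  obtain ⟨y, hy, hya⟩ := hmeet a haG haC
  obtain ⟨z, -, hzu, hzv⟩ := hC'conn.image φ hφ.continuousOn _ _ isOpen_thickening
    isOpen_thickening hsub ⟨φ x, mem_image_of_mem φ hx, mem_thickening_iff.2 ⟨_, hbu, hxb⟩⟩
    ⟨φ y, mem_image_of_mem φ hy, mem_thickening_iff.2 ⟨_, hav, hya⟩⟩
  exact disjoint_left.1 hdisj hzu hzv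

/-- The image of a subcontinuum under an element of the functional envelope, as a point of
the hyperspace of subcontinua. -/
def imageSubCon (hT : IsTreeSpace T) (G : ↥(FunctionalEnvelope T)) {C : Set T}
    (hC : IsClosed C) (hconn : IsConnected C) : SubCon T :=
  ⟨⟨⟨imageOn (G.1 : Set (T × T)) C, isCompact_imageOn G.1.isCompact hC⟩,
    (hT.isConnected_imageOn G.2 hC hconn).nonempty⟩, hT.isConnected_imageOn G.2 hC hconn⟩

lemma dist_iterate_envelopeMap_le (hT : IsTreeSpace T) {f : T → T} (hf : Continuous f)
    {F : ↥(FunctionalEnvelope T) → ↥(FunctionalEnvelope T)} (hF : IsEnvelopeMap f F)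
    {s : Set (Set T)} {ε : ℝ} (hε : 0 ≤ ε)
    (hs : ∀ B ∈ s, IsClosed B ∧ IsConnected B ∧ ∀ x ∈ B, ∀ y ∈ B, dist x y ≤ ε)
    (hcov : ⋃₀ s = univ) (j : ℕ) (G H : ↥(FunctionalEnvelope T))
    (h : ∀ B (hB : B ∈ s), dist
      ((indCon f hf)^[j] (imageSubCon hT G (hs B hB).1 (hs B hB).2.1))
      ((indCon f hf)^[j] (imageSubCon hT H (hs B hB).1 (hs B hB).2.1)) ≤ ε) :
    dist (F^[j] G) (F^[j] H) ≤ ε := by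
  have key : ∀ G H : ↥(FunctionalEnvelope T), (∀ B (hB : B ∈ s), dist
      ((indCon f hf)^[j] (imageSubCon hT G (hs B hB).1 (hs B hB).2.1))
      ((indCon f hf)^[j] (imageSubCon hT H (hs B hB).1 (hs B hB).2.1)) ≤ ε) →
      ∀ p ∈ ((F^[j] G : NonemptyCompacts (T × T)) : Set (T × T)),
        ∃ q ∈ ((F^[j] H : NonemptyCompacts (T × T)) : Set (T × T)), dist p q ≤ ε := by
    intro G H h p hp
    rw [coe_iterate_envelopeMap hF] at hp ⊢
    obtain ⟨⟨x, y⟩, hxy, rfl⟩ := hp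
    obtain ⟨B, hB, hxB⟩ := (hcov ▸ mem_univ x : x ∈ ⋃₀ s)
    have hmem : f^[j] y ∈ ((((indCon f hf)^[j]
        (imageSubCon hT G (hs B hB).1 (hs B hB).2.1)).1 : NonemptyCompacts T) : Set T) := by
      rw [coe_iterate_indCon]
      exact mem_image_of_mem _ ⟨(x, y), ⟨hxy, hxB⟩, rfl⟩
    obtain ⟨z, hz, hd⟩ := exists_dist_le_dist_nonemptyCompacts _
      ((indCon f hf)^[j] (imageSubCon hT H (hs B hB).1 (hs B hB).2.1)).1 hmem
    rw [coe_iterate_indCon] at hz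
    obtain ⟨_, ⟨⟨x', y'⟩, ⟨hxy', hxB'⟩, rfl⟩, rfl⟩ := hz
    refine ⟨_, mem_image_of_mem _ hxy', ?_⟩
    exact max_le ((hs B hB).2.2 x hxB x' hxB') (hd.trans (h B hB))
  exact dist_nonemptyCompacts_le hε (key G H h)
    (key H G fun B hB => dist_comm (α := SubCon T) _ _ ▸ h B hB)

/-- A separated set in the envelope is no larger than the number of assignments of elements of
a spanning set to the members of a cover by small subcontinua. -/
lemma card_separated_envelope_le (hT : IsTreeSpace T) {f : T → T} (hf : Continuous f)
    {F : ↥(FunctionalEnvelope T) → ↥(FunctionalEnvelope T)} (hF : IsEnvelopeMap f F)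
    {s : Finset (Set T)} {ε : ℝ} (hε : 0 ≤ ε)
    (hs : ∀ B ∈ s, IsClosed B ∧ IsConnected B ∧ ∀ x ∈ B, ∀ y ∈ B, dist x y ≤ ε)
    (hcov : ⋃₀ (s : Set (Set T)) = univ) {n : ℕ} {S : Finset (SubCon T)}
    (hS : ∀ x, ∃ y ∈ S, ∀ j < n,
      dist ((indCon f hf)^[j] x) ((indCon f hf)^[j] y) ≤ ε / 2)
    {E : Finset ↥(FunctionalEnvelope T)}
    (hE : ∀ x ∈ E, ∀ y ∈ E, x ≠ y → ∃ j < n, ε < dist (F^[j] x) (F^[j] y)) :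
    E.card ≤ S.card ^ s.card := by
  classical
  choose σ hσS hσ using hS
  let Φ : E → (s → S) := fun G B =>
    ⟨σ (imageSubCon hT G.1 (hs B B.2).1 (hs B B.2).2.1), hσS _⟩
  have hinj : Function.Injective Φ := by
    intro G H hGH
    by_contra hne
    obtain ⟨j, hj, hlt⟩ := hE G.1 G.2 H.1 H.2 fun h => hne (Subtype.ext h)
    refine not_le.2 hlt (dist_iterate_envelopeMap_le hT hf hF hε hs hcov j G.1 H.1 ?_)
    intro B hB
    have hΦ : σ (imageSubCon hT G.1 (hs B hB).1 (hs B hB).2.1) =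
        σ (imageSubCon hT H.1 (hs B hB).1 (hs B hB).2.1) :=
      congrArg Subtype.val (congrFun hGH ⟨B, hB⟩)
    have h₁ := hσ (imageSubCon hT G.1 (hs B hB).1 (hs B hB).2.1) j hj
    have h₂ := hσ (imageSubCon hT H.1 (hs B hB).1 (hs B hB).2.1) j hj
    rw [← hΦ] at h₂
    exact (dist_triangle_right _ _ _).trans (by linarith)
  simpa using Fintype.card_le_of_injective Φ hinj

end Envelope

section LowerBound

variable {T : Type*} [MetricSpace T]

lemma IsTreeSpace.joined (hT : IsTreeSpace T) (x y : T) : Joined x y := by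
  by_cases hxy : x = y
  · exact hxy ▸ Joined.refl x
  · obtain ⟨A, ⟨e, h0, h1⟩, -⟩ := hT.uniqueArc x y hxy
    exact ⟨⟨⟨fun t => (e t : T), continuous_subtype_val.comp e.continuous⟩, h0, h1⟩⟩

/-- A curve visiting prescribed points, constant near each of the integers `0, …, k`. -/
lemma exists_curve_locally_constant {X : Type*} [TopologicalSpace X]
    (hX : ∀ x y : X, Joined x y) (e : ℕ → X) (k : ℕ) :
    ∃ γ : ℝ → X, Continuous γ ∧ (∀ i ≤ k, ∀ t : ℝ, |t - i| ≤ 1 / 3 → γ t = e i) ∧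
      ∀ t : ℝ, k - 1 / 3 ≤ t → γ t = e k := by
  induction k with
  | zero =>
    refine ⟨fun _ => e 0, continuous_const, fun i hi t _ => ?_, fun _ _ => rfl⟩
    rw [Nat.le_zero.1 hi]
  | succ k ih =>
    obtain ⟨γ, hγ, hγe, hγk⟩ := ih
    obtain ⟨p⟩ := hX (e k) (e (k + 1))
    have hend : ∀ t : ℝ, ((k + 1 : ℕ) : ℝ) - 1 / 3 ≤ t →
        (if t ≤ (k : ℝ) + 1 / 3 then γ t else p.extend ((t - (k + 1 / 3)) * 3)) =
          e (k + 1) := by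
      intro t ht
      push_cast at ht
      rw [if_neg (by linarith), p.extend_of_one_le (by linarith)]
    refine ⟨fun t => if t ≤ (k : ℝ) + 1 / 3 then γ t else p.extend ((t - (k + 1 / 3)) * 3),
      ?_, ?_, hend⟩
    · refine Continuous.if_le hγ (p.continuous_extend.comp (by fun_prop)) continuous_id
        continuous_const ?_
      rintro t rfl
      rw [hγk _ (by linarith)]
      simp
    · intro i hi t ht
      rcases Nat.le_succ_iff.1 hi with hi | rfl
      · have hik : (i : ℝ) ≤ k := Nat.cast_le.2 hi
        change (if t ≤ (k : ℝ) + 1 / 3 then γ t else _) = e i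
        rw [if_pos (by linarith [(abs_le.1 ht).2]), hγe i hi t ht]
      · exact hend t (by linarith [(abs_le.1 ht).1])

/-- The graph of a continuous self-map of a compact space, as a point of the envelope. -/
lemma exists_envelope_eq_graphOf [CompactSpace T] [Nonempty T] {φ : T → T}
    (hφ : Continuous φ) :
    ∃ G : ↥(FunctionalEnvelope T), (G.1 : Set (T × T)) = graphOf φ := by
  have hcl : IsClosed (graphOf φ) := isClosed_eq continuous_snd (hφ.comp continuous_fst)
  obtain ⟨x⟩ := ‹Nonempty T›
  exact ⟨⟨⟨⟨graphOf φ, hcl.isCompact⟩, ⟨(x, φ x), rfl⟩⟩, subset_closure ⟨φ, hφ, rfl⟩⟩, rfl⟩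

/-- Functions that are constant near finitely many spread-out points give a large separated set
in the envelope. -/
lemma exists_separated_envelope (hT : IsTreeSpace T) {f : T → T}
    {F : ↥(FunctionalEnvelope T) → ↥(FunctionalEnvelope T)} (hF : IsEnvelopeMap f F)
    {x₀ x₁ : T} {ε : ℝ} (hε : 0 < ε) {k n : ℕ} (hk : 3 * ε * k ≤ dist x₀ x₁)
    {E : Finset T} (hE : ∀ x ∈ E, ∀ y ∈ E, x ≠ y → ∃ j < n, ε < dist (f^[j] x) (f^[j] y)) :
    ∃ E' : Finset ↥(FunctionalEnvelope T),
      (∀ x ∈ E', ∀ y ∈ E', x ≠ y → ∃ j < n, ε < dist (F^[j] x) (F^[j] y)) ∧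
      E'.card = E.card ^ k := by
  classical
  have := hT.compact
  have := hT.conn
  have hpt : ∀ i : Fin k, ∃ x : T, dist x₀ x = 3 * ε * (i : ℕ) := by
    intro i
    have hcont : Continuous fun x : T => dist x₀ x := by fun_prop
    refine mem_range_of_exists_le_of_exists_ge hcont ⟨x₀, ?_⟩ ⟨x₁, ?_⟩
    · rw [dist_self]; positivity
    · refine le_trans ?_ hk
      have : ((i : ℕ) : ℝ) ≤ k := Nat.cast_le.2 i.2.le
      gcongr
  choose x hx using hpt
  have hG : ∀ c : Fin k → E, ∃ G : ↥(FunctionalEnvelope T), ∃ φ : T → T,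
      (G.1 : Set (T × T)) = graphOf φ ∧ ∀ i, ∀ y, dist (x i) y ≤ ε → φ y = c i := by
    intro c
    obtain ⟨γ, hγ, hγc, -⟩ := exists_curve_locally_constant hT.joined
      (fun i => if h : i < k then (c ⟨i, h⟩ : T) else x₀) k
    obtain ⟨G, hG⟩ := exists_envelope_eq_graphOf (φ := fun y => γ (dist x₀ y / (3 * ε)))
      (hγ.comp (by fun_prop))
    refine ⟨G, _, hG, fun i y hy => ?_⟩
    have hmem : |dist x₀ y / (3 * ε) - (i : ℕ)| ≤ 1 / 3 := by
      have h₁ : |dist x₀ y - dist x₀ (x i)| ≤ ε := by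
        rw [dist_comm x₀ y, dist_comm x₀ (x i)]
        exact (abs_dist_sub_le _ _ _).trans (by rwa [dist_comm])
      have h₂ : dist x₀ y / (3 * ε) - (i : ℕ) = (dist x₀ y - dist x₀ (x i)) / (3 * ε) := by
        rw [hx i]; field_simp
      rw [h₂, abs_div, abs_of_pos (by positivity : 0 < 3 * ε), div_le_iff₀ (by positivity)]
      linarith
    simpa using hγc i i.2.le _ hmem
  choose Φ φ hΦ hφ using hG
  have hsep : ∀ c c' : Fin k → E, c ≠ c' → ∃ j < n, ε < dist (F^[j] (Φ c)) (F^[j] (Φ c')) := by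
    intro c c' hne
    obtain ⟨i, hi⟩ := Function.ne_iff.1 hne
    obtain ⟨j, hj, hlt⟩ := hE _ (c i).2 _ (c' i).2 fun h => hi (Subtype.ext h)
    refine ⟨j, hj, lt_of_not_ge fun hle => ?_⟩
    have hmem : (x i, f^[j] (c i)) ∈ ((F^[j] (Φ c)).1 : Set (T × T)) := by
      rw [coe_iterate_envelopeMap hF, hΦ]
      exact ⟨(x i, c i), (hφ c i (x i) (by simpa using hε.le)).symm, rfl⟩
    obtain ⟨q, hq, hd⟩ := exists_dist_le_dist_nonemptyCompacts _ (F^[j] (Φ c')).1 hmem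
    rw [coe_iterate_envelopeMap hF, hΦ] at hq
    obtain ⟨⟨y, z⟩, hyz, rfl⟩ := hq
    obtain ⟨hd₁, hd₂⟩ := max_le_iff.1 (hd.trans hle)
    have hz : z = c' i := Eq.trans hyz (hφ c' i y hd₁)
    subst hz
    exact absurd hd₂ (not_le.2 hlt)
  have hinj : Function.Injective Φ := by
    intro c c' hcc
    by_contra hne
    obtain ⟨j, -, hlt⟩ := hsep c c' hne
    rw [hcc, dist_self] at hlt
    exact lt_asymm hε hlt
  refine ⟨Finset.univ.image Φ, ?_, ?_⟩
  · intro G hG H hH hne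
    obtain ⟨c, -, rfl⟩ := Finset.mem_image.1 hG
    obtain ⟨c', -, rfl⟩ := Finset.mem_image.1 hH
    exact hsep c c' fun h => hne (congrArg Φ h)
  · simp [Finset.card_image_of_injective _ hinj]

end LowerBound

section SepNum

variable {X : Type*} [MetricSpace X] {g : X → X} {n : ℕ} {ε : ℝ}

lemma sepNum_le {b : ℕ} (h : ∀ E : Finset X,
    (∀ x ∈ E, ∀ y ∈ E, x ≠ y → ∃ j < n, ε < dist (g^[j] x) (g^[j] y)) → E.card ≤ b) :
    sepNum g n ε ≤ b := by
  refine csSup_le ⟨0, ∅, by simp⟩ ?_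
  rintro _ ⟨E, -, hE, rfl⟩
  exact h E hE

lemma card_le_sepNum {b : ℕ} (h : ∀ E : Finset X,
    (∀ x ∈ E, ∀ y ∈ E, x ≠ y → ∃ j < n, ε < dist (g^[j] x) (g^[j] y)) → E.card ≤ b)
    {E : Finset X} (hE : ∀ x ∈ E, ∀ y ∈ E, x ≠ y → ∃ j < n, ε < dist (g^[j] x) (g^[j] y)) :
    E.card ≤ sepNum g n ε := by
  refine le_csSup ⟨b, ?_⟩ ⟨E, subset_univ _, hE, rfl⟩
  rintro _ ⟨E, -, hE, rfl⟩
  exact h E hE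

/-- `sepNum` is realised by a separated set; when the supremum is junk, by the empty one. -/
lemma exists_separated_card_eq_sepNum (g : X → X) (n : ℕ) (ε : ℝ) : ∃ E : Finset X,
    (∀ x ∈ E, ∀ y ∈ E, x ≠ y → ∃ j < n, ε < dist (g^[j] x) (g^[j] y)) ∧
      E.card = sepNum g n ε := by
  let K := {k : ℕ | ∃ E : Finset X, ↑E ⊆ (univ : Set X) ∧
    (∀ x ∈ E, ∀ y ∈ E, x ≠ y → ∃ j < n, ε < dist (g^[j] x) (g^[j] y)) ∧ E.card = k}
  have hK : K.Nonempty := ⟨0, ∅, by simp⟩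
  by_cases hb : BddAbove K
  · obtain ⟨E, -, hE, hcard⟩ := Nat.sSup_mem hK hb
    exact ⟨E, hE, hcard⟩
  · exact ⟨∅, by simp, (Nat.sSup_of_not_bddAbove hb).symm⟩

end SepNum

/-- separated/spanning estimates between the base system, its
connected envelope, and its functional envelope. -/
theorem sep_span_inequalities {T : Type*} [MetricSpace T]
    (hT : IsTreeSpace T) (f : T → T) (hf : Continuous f)
    (F : ↥(FunctionalEnvelope T) → ↥(FunctionalEnvelope T))
    (hF : IsEnvelopeMap f F) :
    ∃ N1 N2 : ℝ → ℕ,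
      Tendsto N1 (𝓝[>] (0 : ℝ)) atTop ∧ Tendsto N2 (𝓝[>] (0 : ℝ)) atTop ∧
      ∀ ε : ℝ, 0 < ε → ∀ n : ℕ, 1 ≤ n →
        sepNum f n ε ^ N1 ε ≤ sepNum F n ε ∧
        sepNum F n ε ≤ spanNum (indCon f hf) n (ε / 2) ^ N2 ε := by
  classical
  have := hT.compact
  have := hT.conn
  choose! s hsfin hs hcov using fun (ε : ℝ) (hε : 0 < ε) => hT.exists_finite_cover hε
  obtain ⟨x₀, x₁, hx⟩ : ∃ x₀ x₁ : T, dist x₀ x₁ = 0 → Subsingleton T := by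
    rcases subsingleton_or_nontrivial T with h | ⟨x₀, x₁, h⟩
    · obtain ⟨x⟩ := (inferInstance : Nonempty T)
      exact ⟨x, x, fun _ => h⟩
    · exact ⟨x₀, x₁, fun h0 => absurd (dist_eq_zero.1 h0) h⟩
  have hfloor : ∀ D : ℝ, 0 < D → Tendsto (fun ε : ℝ => ⌊D * ε⁻¹⌋₊) (𝓝[>] (0 : ℝ)) atTop :=
    fun D hD => tendsto_nat_floor_atTop.comp (tendsto_inv_nhdsGT_zero.const_mul_atTop hD)
  obtain ⟨D, hD, hDx⟩ : ∃ D > 0, dist x₀ x₁ = 0 ∨ 3 * D = dist x₀ x₁ := by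
    rcases (dist_nonneg (x := x₀) (y := x₁)).eq_or_lt with h | h
    · exact ⟨1, one_pos, Or.inl h.symm⟩
    · exact ⟨dist x₀ x₁ / 3, by positivity, Or.inr (by ring)⟩
  refine ⟨fun ε => ⌊D * ε⁻¹⌋₊, fun ε => (s ε).ncard + ⌊1 * ε⁻¹⌋₊, hfloor D hD,
    tendsto_atTop_mono (fun ε => Nat.le_add_left _ _) (hfloor 1 one_pos), ?_⟩
  intro ε hε n _
  obtain ⟨S, hS, hScard⟩ := exists_spanning_card_eq_spanNum (exists_finset_spanning
    totallyBounded_univ_subCon (uniformContinuous_indCon hf) n (half_pos hε))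
  have hub : ∀ E : Finset ↥(FunctionalEnvelope T),
      (∀ x ∈ E, ∀ y ∈ E, x ≠ y → ∃ j < n, ε < dist (F^[j] x) (F^[j] y)) →
      E.card ≤ S.card ^ (s ε).ncard := by
    intro E hE
    rw [ncard_eq_toFinset_card _ (hsfin ε hε)]
    refine card_separated_envelope_le hT hf hF hε.le ?_ ?_ hS hE
    · simpa using hs ε hε
    · simpa using hcov ε hε
  refine ⟨?_, ?_⟩
  · obtain ⟨E, hE, hcard⟩ := exists_separated_card_eq_sepNum f n ε
    rw [← hcard]
    rcases hDx with h0 | h3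
    · have := hx h0
      obtain ⟨G, -⟩ := exists_envelope_eq_graphOf (continuous_id (X := T))
      refine (pow_le_one₀ (Nat.zero_le _) (Finset.card_le_one_of_subsingleton E)).trans ?_
      exact card_le_sepNum hub (E := {G}) (by simp)
    · obtain ⟨E', hE', hcard'⟩ := exists_separated_envelope hT hF (x₀ := x₀) (x₁ := x₁) hε
        (k := ⌊D * ε⁻¹⌋₊) (by
          have h₁ := Nat.floor_le (a := D * ε⁻¹) (by positivity)
          have h₂ : ε * (D * ε⁻¹) = D := by field_simp
          nlinarith) hE
      exact hcard' ▸ card_le_sepNum hub hE'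
  · have hpos : 0 < S.card := by
      obtain ⟨x⟩ := (inferInstance : Nonempty T)
      obtain ⟨y, hy, -⟩ := hS ⟨⟨⟨{x}, isCompact_singleton⟩, singleton_nonempty x⟩,
        isConnected_singleton⟩
      exact Finset.card_pos.2 ⟨y, hy⟩
    rw [← hScard]
    exact (sepNum_le hub).trans (Nat.pow_le_pow_right hpos (Nat.le_add_right _ _))
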